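/- arXiv:2004.10521 — 2 statements merged into one kernel-verified Lean document; each statement's English description precedes it below -/
import Mathlib

section
/- If Z satisfies the graphical adjustment criterion for A,Y,L,N in G, then Z ∩ an_G({A,Y}∪L) also satisfies the graphical adjustment criterion for A,Y,L,N in G. In particular, every minimal set satisfying the criterion is a subset of an_G({A,Y}∪L). -/
open Relation Set

namespace CausalGraph

variable {V : Type*} [Fintype V] [DecidableEq V]

/-- `p` is a path in the undirected sense from `u` to `v` along adjacency `Adj`:
a nonempty list of pairwise distinct vertices, consecutive ones adjacent,
starting at `u` and ending at `v`. -/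
def IsPath (Adj : V → V → Prop) (u v : V) (p : List V) : Prop :=
  List.Chain' Adj p ∧ p.head? = some u ∧ p.getLast? = some v ∧ p.Nodup

/-- Ancestors of `S` in the digraph `D` (every vertex is an ancestor of itself). -/
def anc (D : V → V → Prop) (S : Set V) : Set V :=
  {u | ∃ v ∈ S, Relation.ReflTransGen D u v}

/-- Descendants of `S` in the digraph `D` (every vertex is a descendant of itself). -/
def desc (D : V → V → Prop) (S : Set V) : Set V :=
  {u | ∃ v ∈ S, Relation.ReflTransGen D v u}

/-- Parents of vertices of `S` in the digraph `D`. -/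
def parents (D : V → V → Prop) (S : Set V) : Set V :=
  {u | ∃ v ∈ S, D u v}

/-- The digraph `D` is acyclic. -/
def Acyclic (D : V → V → Prop) : Prop :=
  ∀ u v, D u v → ¬ Relation.ReflTransGen D v u

/-- Vertices other than `A` lying on a directed path from `A` to `Y`. -/
def cn (D : V → V → Prop) (A Y : V) : Set V :=
  {v | v ≠ A ∧ Relation.ReflTransGen D A v ∧ Relation.ReflTransGen D v Y}

/-- The forbidden set. -/
def forb (D : V → V → Prop) (A Y : V) : Set V :=
  desc D (cn D A Y) ∪ {A}

/-- Proper back-door graph: delete every edge from `A` into `cn D A Y`. -/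
def pbd (D : V → V → Prop) (A Y : V) : V → V → Prop :=
  fun u v => D u v ∧ ¬(u = A ∧ v ∈ cn D A Y)

/-- `y` is an interior vertex of the list `p` with neighbours `x` and `z` on the path. -/
def InteriorAt (p : List V) (x y z : V) : Prop :=
  ∃ s t : List V, p = s ++ x :: y :: z :: t

/-- The path `p` is blocked by `Z` in the digraph `D`: some interior non-collider
lies in `Z`, or some interior collider has no descendant in `Z`. -/
def Blocked (D : V → V → Prop) (Z : Set V) (p : List V) : Prop :=
  (∃ x y z, InteriorAt p x y z ∧ ¬(D x y ∧ D z y) ∧ y ∈ Z) ∨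
  (∃ x y z, InteriorAt p x y z ∧ (D x y ∧ D z y) ∧ ∀ d ∈ desc D {y}, d ∉ Z)

/-- d-separation of `S` and `T` given `Z` in the digraph `D`. -/
def DSep (D : V → V → Prop) (S T Z : Set V) : Prop :=
  ∀ s ∈ S, ∀ t ∈ T, ∀ p : List V,
    IsPath (fun a b => D a b ∨ D b a) s t p → Blocked D Z p

/-- Moral graph of the subgraph of the digraph `D` induced on `Vs`. -/
def moral (D : V → V → Prop) (Vs : Set V) : SimpleGraph V :=
  SimpleGraph.fromRel (fun u v =>
    u ∈ Vs ∧ v ∈ Vs ∧ (D u v ∨ D v u ∨ ∃ w ∈ Vs, D u w ∧ D v w))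

/-- Separation in an undirected graph: every path from `S` to `T` meets `W`. -/
def USep (H : SimpleGraph V) (S T W : Set V) : Prop :=
  ∀ s ∈ S, ∀ t ∈ T, ∀ p : List V, IsPath H.Adj s t p → ∃ z ∈ W, z ∈ p

/-- `Z` is an `A`–`Y` cut in an undirected graph `H` with vertex set `Vs`. -/
def IsCut (Vs : Set V) (H : SimpleGraph V) (A Y : V) (Z : Set V) : Prop :=
  Z ⊆ Vs ∧ Z ∩ {A, Y} = ∅ ∧ ∀ p : List V, IsPath H.Adj A Y p → ∃ z ∈ Z, z ∈ p

def MinimalCut (Vs : Set V) (H : SimpleGraph V) (A Y : V) (Z : Set V) : Prop :=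
  IsCut Vs H A Y Z ∧ ∀ Z' ⊂ Z, ¬ IsCut Vs H A Y Z'

def MinimumCut (Vs : Set V) (H : SimpleGraph V) (A Y : V) (Z : Set V) : Prop :=
  IsCut Vs H A Y Z ∧ ∀ Z', IsCut Vs H A Y Z' → Z.ncard ≤ Z'.ncard

/-- Connected component of `y` in `H` restricted to the complement of `U`:
vertices reachable from `y` by paths avoiding `U`. -/
def cc (H : SimpleGraph V) (U : Set V) (y : V) : Set V :=
  {w | ∃ p : List V, IsPath H.Adj y w p ∧ ∀ x ∈ p, x ∉ U}

/-- Boundary of `S` in `H`: vertices outside `S` adjacent to some vertex of `S`. -/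
def bdry (H : SimpleGraph V) (S : Set V) : Set V :=
  {v | v ∉ S ∧ ∃ u ∈ S, H.Adj v u}

/-- The partial order `Z₁ ⊴_H Z₂` between `A`–`Y` cuts. -/
def TLE (H : SimpleGraph V) (A Y : V) (Z₁ Z₂ : Set V) : Prop :=
  USep H {Y} (Z₂ \ Z₁) Z₁ ∧ USep H {A} (Z₁ \ Z₂) Z₂

/-- Ancestors of `{A, Y} ∪ L`. -/
def ancAYL (D : V → V → Prop) (A Y : V) (L : Set V) : Set V :=
  anc D ({A, Y} ∪ L)

/-- The moral graph `H⁰` of the proper back-door graph induced on `an_G({A,Y} ∪ L)`. -/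
def H0 (D : V → V → Prop) (A Y : V) (L : Set V) : SimpleGraph V :=
  moral (pbd D A Y) (ancAYL D A Y L)

/-- The set of vertices removed from `H⁰` when constructing `H¹`. -/
def Ignore (D : V → V → Prop) (A Y : V) (L N : Set V) : Set V :=
  (ancAYL D A Y L \ {A, Y}) ∩ ((Set.univ \ N) ∪ forb D A Y)

/-- Vertex set of `H¹`. -/
def H1verts (D : V → V → Prop) (A Y : V) (L N : Set V) : Set V :=
  ancAYL D A Y L \ Ignore D A Y L N

/-- The non-parametric adjustment efficiency graph `H¹`: delete the vertices of
`Ignore`, join two remaining vertices if they are joined in `H⁰` by a path all of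
whose intermediate vertices are in `Ignore`, and join `A` and `Y` to every vertex
of `L`. -/
def H1 (D : V → V → Prop) (A Y : V) (L N : Set V) : SimpleGraph V :=
  SimpleGraph.fromRel (fun u v =>
    u ∈ H1verts D A Y L N ∧ v ∈ H1verts D A Y L N ∧
      ((∃ p : List V, IsPath (H0 D A Y L).Adj u v p ∧
          ∀ x ∈ p, x ≠ u → x ≠ v → x ∈ Ignore D A Y L N) ∨
        (u = A ∧ v ∈ L) ∨ (u = Y ∧ v ∈ L)))

/-- The graphical adjustment criterion for `A, Y, L, N` in the DAG `D`. -/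
def GAC (D : V → V → Prop) (A Y : V) (L N Z : Set V) : Prop :=
  DSep (pbd D A Y) {A} {Y} Z ∧ Z ∩ forb D A Y = ∅ ∧ L ⊆ Z ∧ Z ⊆ N

def MinimalGAC (D : V → V → Prop) (A Y : V) (L N Z : Set V) : Prop :=
  GAC D A Y L N Z ∧ ∀ Z' ⊂ Z, ¬ GAC D A Y L N Z'

def MinimumGAC (D : V → V → Prop) (A Y : V) (L N Z : Set V) : Prop :=
  GAC D A Y L N Z ∧ ∀ Z', GAC D A Y L N Z' → Z.ncard ≤ Z'.ncard

/-- Graphical admissibility of the pair `(L, N)`. -/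
def Admissible (D : V → V → Prop) (A Y : V) (L N : Set V) : Prop :=
  ∃ Z, GAC D A Y L N Z

end CausalGraph

namespace CausalGraph

/-!
Let `W` be an ancestral set containing the endpoints of a path `p`. If `p` is open given `Z ∩ W`,
each of its colliders has a descendant in `W`, hence lies in `W`. A non-collider of `p` has an edge
of `p` leaving it; following `p` along that edge leads by a directed path to a collider or to an
endpoint, so the non-collider is in `W` too. As all of `p` lies in `W`, intersecting `Z` with `W`
unblocks no path. The adjustment criterion is the case of the proper back-door graph and
`W = an_G({A, Y} ∪ L)`, which is ancestral there because that graph is a subgraph of `G`.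
-/

section

variable {V : Type*} {D E : V → V → Prop} {W Z : Set V}

/-- Ancestral sets of the digraph `E`: sets closed under taking parents. -/
def IsAncestral (E : V → V → Prop) (W : Set V) : Prop :=
  ∀ ⦃u v⦄, E u v → v ∈ W → u ∈ W

/-- Every interior collider of the path `p` belongs to `W`. When `W` is ancestral, every
path that is open given a subset of `W` has this property. -/
def CollidersIn (E : V → V → Prop) (W : Set V) (p : List V) : Prop :=
  ∀ ⦃x y z⦄, InteriorAt p x y z → E x y → E z y → y ∈ W

namespace IsAncestral

theorem anti (hW : IsAncestral D W) (hED : ∀ u v, E u v → D u v) : IsAncestral E W :=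
  fun u v huv hv => hW (hED u v huv) hv

theorem mem_of_reflTransGen (hW : IsAncestral E W) {u v : V} (huv : ReflTransGen E u v)
    (hv : v ∈ W) : u ∈ W := by
  induction huv using ReflTransGen.head_induction_on with
  | refl => exact hv
  | head hedge _ ih => exact hW hedge ih

end IsAncestral

theorem isAncestral_anc (D : V → V → Prop) (S : Set V) : IsAncestral D (anc D S) :=
  fun _ _ huv ⟨w, hw, hvw⟩ => ⟨w, hw, .head huv hvw⟩

theorem subset_anc (D : V → V → Prop) (S : Set V) : S ⊆ anc D S :=
  fun v hv => ⟨v, hv, .refl⟩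

theorem interiorAt_iff_infix {p : List V} {x y z : V} :
    InteriorAt p x y z ↔ [x, y, z] <:+: p := by
  simp [InteriorAt, List.IsInfix, eq_comm]

theorem IsPath.reverse {Adj : V → V → Prop} [Std.Symm Adj] {u v : V} {p : List V}
    (hp : IsPath Adj u v p) : IsPath Adj v u p.reverse := by
  obtain ⟨hchain, hhead, hlast, hnodup⟩ := hp
  refine ⟨?_, by simpa using hlast, by simpa using hhead, List.nodup_reverse.2 hnodup⟩
  exact List.isChain_reverse.2 (hchain.imp fun _ _ h => symm h)

namespace CollidersIn

theorem of_infix {p q : List V} (hp : CollidersIn E W p) (hqp : q <:+: p) :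
    CollidersIn E W q :=
  fun _ _ _ hi => hp (interiorAt_iff_infix.2 ((interiorAt_iff_infix.1 hi).trans hqp))

theorem reverse {p : List V} (hp : CollidersIn E W p) : CollidersIn E W p.reverse := by
  intro x y z hi hxy hzy
  have hrev : [z, y, x] <:+: p := List.reverse_infix.1 (interiorAt_iff_infix.1 hi)
  exact hp (interiorAt_iff_infix.2 hrev) hzy hxy

end CollidersIn

theorem IsAncestral.mem_of_edge_infix (hW : IsAncestral E W) {p : List V}
    (hchain : p.IsChain fun a b => E a b ∨ E b a) (hcol : CollidersIn E W p)
    (hlast : ∀ w ∈ p.getLast?, w ∈ W) {x y : V} (hxy : [x, y] <:+: p) (hE : E x y) : x ∈ W := by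
  induction p generalizing x y with
  | nil => simp at hxy
  | cons a q ih =>
    have mem_of_edge_tail {u v : V} : [u, v] <:+: q → E u v → u ∈ W :=
      ih hchain.tail (hcol.of_infix (List.suffix_cons a q).isInfix)
        (fun w hw => hlast w (List.mem_getLast?_cons hw))
    rcases List.infix_cons_iff.1 hxy with hprefix | htail
    · obtain ⟨r, hr⟩ := hprefix
      obtain ⟨rfl, rfl⟩ : x = a ∧ y :: r = q := by simpa using hr
      refine hW hE ?_
      cases r with
      | nil => exact hlast y (by simp)
      | cons z r =>
        rcases hchain.tail.rel with hyz | hzy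
        · exact mem_of_edge_tail (List.prefix_append [y, z] r).isInfix hyz
        · exact hcol ⟨[], r, rfl⟩ hE hzy
    · exact mem_of_edge_tail htail hE

theorem IsAncestral.mem_of_not_collider (hW : IsAncestral E W) {s t : V} {p : List V}
    (hp : IsPath (fun a b => E a b ∨ E b a) s t p) (hs : s ∈ W) (ht : t ∈ W)
    (hcol : CollidersIn E W p) {x y z : V} (hi : InteriorAt p x y z)
    (hn : ¬(E x y ∧ E z y)) : y ∈ W := by
  have mem_of_edge {s t y z : V} {p : List V}
      (hp : IsPath (fun a b => E a b ∨ E b a) s t p) (ht : t ∈ W) (hcol : CollidersIn E W p)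
      (hyz : [y, z] <:+: p) (hE : E y z) : y ∈ W :=
    hW.mem_of_edge_infix hp.1 hcol (by simpa [hp.2.2.1] using ht) hyz hE
  have hxyz : [x, y, z] <:+: p := interiorAt_iff_infix.1 hi
  obtain ⟨hxy, hyz⟩ : (E x y ∨ E y x) ∧ (E y z ∨ E z y) := by
    simpa using hp.1.infix hxyz
  have houtgoing : E y z ∨ E y x := by tauto
  rcases houtgoing with hyz | hyx
  · exact mem_of_edge hp ht hcol ((List.suffix_cons x [y, z]).isInfix.trans hxyz) hyz
  · have hyx_infix : [y, x] <:+: p.reverse :=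
      List.reverse_infix.1 (by simpa using (List.prefix_append [x, y] [z]).isInfix.trans hxyz)
    have : Std.Symm fun a b => E a b ∨ E b a := ⟨fun _ _ => Or.symm⟩
    exact mem_of_edge hp.reverse hs hcol.reverse hyx_infix hyx

theorem IsAncestral.blocked_of_not_collidersIn (hW : IsAncestral E W) {p : List V}
    (hcol : ¬CollidersIn E W p) : Blocked E (Z ∩ W) p := by
  simp only [CollidersIn, not_forall] at hcol
  obtain ⟨x, y, z, hi, hxy, hzy, hy⟩ := hcol
  refine Or.inr ⟨x, y, z, hi, ⟨hxy, hzy⟩, ?_⟩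
  rintro d ⟨_, rfl, hyd⟩ ⟨-, hd⟩
  exact hy (hW.mem_of_reflTransGen hyd hd)

theorem DSep.inter_of_isAncestral {S T : Set V} (h : DSep E S T Z) (hW : IsAncestral E W)
    (hS : S ⊆ W) (hT : T ⊆ W) : DSep E S T (Z ∩ W) := by
  intro s hs t ht p hp
  by_cases hcol : CollidersIn E W p
  · rcases h s hs t ht p hp with ⟨x, y, z, hi, hn, hy⟩ | ⟨x, y, z, hi, hxzy, hdesc⟩
    · exact Or.inl ⟨x, y, z, hi, hn, hy, hW.mem_of_not_collider hp (hS hs) (hT ht) hcol hi hn⟩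
    · exact Or.inr ⟨x, y, z, hi, hxzy, fun d hd hdZ => hdesc d hd hdZ.1⟩
  · exact hW.blocked_of_not_collidersIn hcol

theorem GAC.inter_of_isAncestral {A Y : V} {L N : Set V} (h : GAC D A Y L N Z)
    (hW : IsAncestral D W) (hAYL : {A, Y} ∪ L ⊆ W) : GAC D A Y L N (Z ∩ W) := by
  obtain ⟨hsep, hforb, hLZ, hZN⟩ := h
  obtain ⟨hAY, hLW⟩ := union_subset_iff.1 hAYL
  obtain ⟨hA, hY⟩ := pair_subset_iff.1 hAY
  refine ⟨?_, ?_, subset_inter hLZ hLW, inter_subset_left.trans hZN⟩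
  · exact hsep.inter_of_isAncestral (hW.anti fun _ _ huv => huv.1)
      (singleton_subset_iff.2 hA) (singleton_subset_iff.2 hY)
  · exact subset_eq_empty (inter_subset_inter_left _ inter_subset_left) hforb

theorem MinimalGAC.subset_of_gac_inter {A Y : V} {L N : Set V} (h : MinimalGAC D A Y L N Z)
    (hZW : GAC D A Y L N (Z ∩ W)) : Z ⊆ W := by
  by_contra hsub
  exact h.2 (Z ∩ W) (inter_ssubset_left_iff.2 hsub) hZW

theorem stmt7_general (D : V → V → Prop) (A Y : V) (L N : Set V) :
    (∀ Z, GAC D A Y L N Z → GAC D A Y L N (Z ∩ ancAYL D A Y L)) ∧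
    (∀ Z, MinimalGAC D A Y L N Z → Z ⊆ ancAYL D A Y L) := by
  have hinter (Z : Set V) (h : GAC D A Y L N Z) : GAC D A Y L N (Z ∩ ancAYL D A Y L) :=
    h.inter_of_isAncestral (isAncestral_anc D _) (subset_anc D _)
  exact ⟨hinter, fun Z h => h.subset_of_gac_inter (hinter Z h.1)⟩

end

/-- if `Z` satisfies the graphical adjustment criterion, so does
`Z ∩ an_G({A,Y} ∪ L)`; in particular every minimal set satisfying the criterion
is contained in `an_G({A,Y} ∪ L)`. -/
theorem stmt7 {V : Type*} [Fintype V] [DecidableEq V]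
    (D : V → V → Prop) (hacy : Acyclic D)
    (A Y : V) (L N : Set V)
    (hAY : A ≠ Y) (hAancY : Relation.ReflTransGen D A Y)
    (hLnd : L ∩ desc D {A} = ∅) (hLY : Y ∉ L)
    (hN : {A, Y} ∪ L ⊆ N) :
    (∀ Z, GAC D A Y L N Z → GAC D A Y L N (Z ∩ ancAYL D A Y L)) ∧
    (∀ Z, MinimalGAC D A Y L N Z → Z ⊆ ancAYL D A Y L) :=
  stmt7_general D A Y L N

end CausalGraph
end

section
/- Assume (L,N) is graphically admissible. If Z₁ and Z₂ are minimal (respectively, minimum) sets satisfying the graphical adjustment criterion for A,Y,L,N in G, then the set Z₁ ∧ Z₂ := ∂_{H^1}(cc(Z₁∪Z₂, Y, H^1)) is also a minimal (respectively, minimum) set satisfying the criterion; moreover Z₁∧Z₂ ⊆ Z₁∪Z₂, Z₁∧Z₂ ⊴_{H^1} Z₁ and Z₁∧Z₂ ⊴_{H^1} Z₂. -/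
open Relation Set

namespace CausalGraph

/-! Adjustment sets inside `an({A, Y} ∪ L)` are exactly the `A`–`Y` vertex cuts of `H¹`, and minimal
or minimum adjustment sets always lie inside this ancestral set. For the first claim, d-separation
becomes separation in the moral graph `H⁰`; a set disjoint from `Ignore` separates in `H⁰` if and
only if it does so after the vertices of `Ignore` are projected out; and the edges from `A` and `Y`
to `L` force `L` into every cut. For the second, every walk from `A` to `Y` that is open given
`Z ∩ an({A, Y} ∪ L)` stays inside `an({A, Y} ∪ L)`, so it is also open given `Z`.

In an undirected graph, `Z₁ ∧ Z₂` consists of the vertices of `Z₁ ∪ Z₂` first met when leaving `Y`.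
This is again a cut; each of its vertices keeps a neighbour on the `A` side from the cut `Zᵢ` it
came from, which gives minimality, and a submodularity count gives minimum cardinality. -/

section Reachability

variable {V : Type*} {H : SimpleGraph V} {U W W' : Set V} {u v w : V}

theorem exists_isPath_iff_exists_walk {P : V → Prop} :
    (∃ p, IsPath H.Adj u v p ∧ ∀ x ∈ p, P x) ↔ ∃ p : H.Walk u v, ∀ x ∈ p.support, P x := by
  classical
  constructor
  · rintro ⟨p, ⟨hchain, hhead, hlast, -⟩, hP⟩
    have hne : p ≠ [] := by rintro rfl; simp at hhead
    replace hchain : p.IsChain H.Adj := hchain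
    obtain rfl : p.head hne = u := by simpa [List.head?_eq_some_head hne] using hhead
    obtain rfl : p.getLast hne = v := by simpa [List.getLast?_eq_some_getLast hne] using hlast
    exact ⟨.ofSupport p hne hchain, by rwa [SimpleGraph.Walk.support_ofSupport]⟩
  · rintro ⟨p, hP⟩
    refine ⟨p.bypass.support, ⟨p.bypass.isChain_adj_support, ?_, ?_, p.bypass_isPath.support_nodup⟩,
      fun x hx => hP x (p.support_bypass_subset_support hx)⟩
    · rw [List.head?_eq_some_head p.bypass.support_ne_nil, p.bypass.head_support]
    · rw [List.getLast?_eq_some_getLast p.bypass.support_ne_nil, p.bypass.getLast_support]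

/-- `u` and `v` are joined in `H` by a walk all of whose vertices, the two ends included, lie
outside `W`. Its negation is separation by `W`, and its classes are the components `cc`. -/
def ReachAvoiding (H : SimpleGraph V) (W : Set V) (u v : V) : Prop :=
  ∃ p : H.Walk u v, ∀ x ∈ p.support, x ∉ W

theorem reachAvoiding_iff_exists_isPath :
    ReachAvoiding H W u v ↔ ∃ p, IsPath H.Adj u v p ∧ ∀ x ∈ p, x ∉ W :=
  exists_isPath_iff_exists_walk.symm

theorem uSep_iff {S T : Set V} :
    USep H S T W ↔ ∀ s ∈ S, ∀ t ∈ T, ¬ ReachAvoiding H W s t := by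
  simp only [USep, reachAvoiding_iff_exists_isPath, not_exists, not_and, not_forall, not_not,
    exists_prop, and_comm]

theorem mem_cc : w ∈ cc H U u ↔ ReachAvoiding H U u w :=
  reachAvoiding_iff_exists_isPath.symm

theorem reachAvoiding_self_iff : ReachAvoiding H W u u ↔ u ∉ W :=
  ⟨fun ⟨p, hp⟩ => hp u p.start_mem_support, fun hu => ⟨.nil, by simpa using hu⟩⟩

namespace ReachAvoiding

theorem start_notMem (h : ReachAvoiding H W u v) : u ∉ W :=
  h.elim fun p hp => hp u p.start_mem_support

theorem end_notMem (h : ReachAvoiding H W u v) : v ∉ W :=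
  h.elim fun p hp => hp v p.end_mem_support

theorem symm (h : ReachAvoiding H W u v) : ReachAvoiding H W v u := by
  obtain ⟨p, hp⟩ := h
  exact ⟨p.reverse, by simpa using hp⟩

theorem trans (huv : ReachAvoiding H W u v) (hvw : ReachAvoiding H W v w) :
    ReachAvoiding H W u w := by
  obtain ⟨p, hp⟩ := huv
  obtain ⟨q, hq⟩ := hvw
  exact ⟨p.append q, fun x hx =>
    ((SimpleGraph.Walk.mem_support_append_iff _ _).1 hx).elim (hp x) (hq x)⟩

theorem of_adj (h : H.Adj u v) (hu : u ∉ W) (hv : v ∉ W) : ReachAvoiding H W u v :=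
  ⟨h.toWalk, by simp [hu, hv]⟩

theorem tail (huv : ReachAvoiding H W u v) (h : H.Adj v w) (hw : w ∉ W) :
    ReachAvoiding H W u w :=
  huv.trans (of_adj h huv.end_notMem hw)

theorem mem_of_closed {S : Set V} (h : ReachAvoiding H W u v) (hu : u ∈ S)
    (hS : ∀ a ∈ S, ∀ b, a ∉ W → b ∉ W → H.Adj a b → b ∈ S) : v ∈ S := by
  obtain ⟨p, hp⟩ := h
  by_contra hv
  obtain ⟨d, hd, hfst, hsnd⟩ := p.exists_boundary_dart S hu hv
  exact hsnd (hS _ hfst _ (hp _ (p.dart_fst_mem_support_of_mem_darts hd))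
    (hp _ (p.dart_snd_mem_support_of_mem_darts hd)) d.adj)

theorem of_forall_notMem (h : ReachAvoiding H W u v)
    (hW' : ∀ x, ReachAvoiding H W u x → x ∉ W') : ReachAvoiding H W' u v := by
  classical
  obtain ⟨p, hp⟩ := h
  exact ⟨p, fun x hx => hW' x ⟨p.takeUntil x hx, fun y hy =>
    hp y (p.support_takeUntil_subset_support hx hy)⟩⟩

theorem mono (h : ReachAvoiding H W u v) (hWW' : W' ⊆ W) : ReachAvoiding H W' u v :=
  h.of_forall_notMem fun _ hx hxW' => hx.end_notMem (hWW' hxW')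

theorem or_exists_adj_of_diff_singleton (h : ReachAvoiding H (W \ {w}) u v) (hu : u ∉ W) :
    ReachAvoiding H W u v ∨ ∃ x, ReachAvoiding H W u x ∧ H.Adj x w := by
  by_contra! hcon
  refine hcon.1 (h.mem_of_closed (S := {x | ReachAvoiding H W u x})
    (reachAvoiding_self_iff.2 hu) fun a ha b _ hb hab => ha.tail hab fun hbW => ?_)
  obtain rfl : b = w := by_contra fun hbw => hb ⟨hbW, hbw⟩
  exact hcon.2 a ha hab

end ReachAvoiding

end Reachability

section NearBoundary

variable {V : Type*} {Vs : Set V} {H : SimpleGraph V} {A Y y v : V} {U Z Z₁ Z₂ : Set V}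

/-- The vertices of `U` that are first met when leaving `y`; the paper's `Z₁ ∧ Z₂` is
`nearBdry H (Z₁ ∪ Z₂) Y`. -/
def nearBdry (H : SimpleGraph V) (U : Set V) (y : V) : Set V :=
  bdry H (cc H U y)

theorem mem_nearBdry_iff :
    v ∈ nearBdry H U y ↔ ¬ ReachAvoiding H U y v ∧ ∃ u, ReachAvoiding H U y u ∧ H.Adj v u := by
  simp only [nearBdry, bdry, mem_cc, mem_ofPred_eq]

theorem nearBdry_subset : nearBdry H U y ⊆ U := by
  intro v hv
  obtain ⟨hv, u, hu, hvu⟩ := mem_nearBdry_iff.1 hv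
  by_contra hvU
  exact hv (hu.tail hvu.symm hvU)

theorem ReachAvoiding.of_nearBdry (h : ReachAvoiding H (nearBdry H U y) y v) (hy : y ∉ U) :
    ReachAvoiding H U y v := by
  refine h.mem_of_closed (S := {x | ReachAvoiding H U y x}) (reachAvoiding_self_iff.2 hy) ?_
  intro a ha b _ hb hab
  by_contra hyb
  exact hb (mem_nearBdry_iff.2 ⟨hyb, a, ha, hab.symm⟩)

theorem reachAvoiding_of_mem_nearBdry (hv : v ∈ nearBdry H U y) (hZU : Z ⊆ U) (hvZ : v ∉ Z) :
    ReachAvoiding H Z y v := by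
  obtain ⟨-, u, hu, hvu⟩ := mem_nearBdry_iff.1 hv
  exact (hu.mono hZU).tail hvu.symm hvZ

theorem isCut_iff :
    IsCut Vs H A Y Z ↔ Z ⊆ Vs ∧ A ∉ Z ∧ Y ∉ Z ∧ ¬ ReachAvoiding H Z A Y := by
  have hdisj : Z ∩ {A, Y} = ∅ ↔ A ∉ Z ∧ Y ∉ Z := by
    rw [inter_comm, ← disjoint_iff_inter_eq_empty]
    simp only [disjoint_insert_left, disjoint_singleton_left]
  have hsep : (∀ p, IsPath H.Adj A Y p → ∃ z ∈ Z, z ∈ p) ↔ ¬ ReachAvoiding H Z A Y := by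
    simpa only [USep, mem_singleton_iff, forall_eq] using uSep_iff (H := H) (S := {A}) (T := {Y})
  rw [IsCut, hdisj, hsep, and_assoc]

namespace IsCut

protected theorem subset (h : IsCut Vs H A Y Z) : Z ⊆ Vs := h.1

theorem source_notMem (h : IsCut Vs H A Y Z) : A ∉ Z := (isCut_iff.1 h).2.1

theorem target_notMem (h : IsCut Vs H A Y Z) : Y ∉ Z := (isCut_iff.1 h).2.2.1

theorem not_reachAvoiding (h : IsCut Vs H A Y Z) : ¬ ReachAvoiding H Z A Y :=
  (isCut_iff.1 h).2.2.2

protected theorem symm (h : IsCut Vs H A Y Z) : IsCut Vs H Y A Z :=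
  isCut_iff.2 ⟨h.subset, h.target_notMem, h.source_notMem, fun hr => h.not_reachAvoiding hr.symm⟩

protected theorem union (h₁ : IsCut Vs H A Y Z₁) (h₂ : IsCut Vs H A Y Z₂) :
    IsCut Vs H A Y (Z₁ ∪ Z₂) :=
  isCut_iff.2 ⟨union_subset h₁.subset h₂.subset,
    fun h => h.elim h₁.source_notMem h₂.source_notMem,
    fun h => h.elim h₁.target_notMem h₂.target_notMem,
    fun h => h₁.not_reachAvoiding (h.mono subset_union_left)⟩

protected theorem nearBdry (h : IsCut Vs H A Y U) : IsCut Vs H A Y (nearBdry H U Y) :=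
  isCut_iff.2 ⟨nearBdry_subset.trans h.subset, fun hA => h.source_notMem (nearBdry_subset hA),
    fun hY => h.target_notMem (nearBdry_subset hY),
    fun hr => h.not_reachAvoiding (hr.symm.of_nearBdry h.target_notMem).symm⟩

theorem notMem_nearBdry_of_reachAvoiding (h : IsCut Vs H A Y Z) (hZU : Z ⊆ U)
    (hv : ReachAvoiding H Z A v) : v ∉ nearBdry H U Y := fun hmem =>
  h.not_reachAvoiding
    (hv.trans (reachAvoiding_of_mem_nearBdry hmem hZU hv.end_notMem).symm)

theorem tLE_nearBdry (h : IsCut Vs H A Y Z) (hZU : Z ⊆ U) (hYU : Y ∉ U) :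
    TLE H A Y (nearBdry H U Y) Z := by
  simp only [TLE, uSep_iff, mem_singleton_iff, forall_eq]
  refine ⟨fun t ht hr => (hr.of_nearBdry hYU).end_notMem (hZU ht.1), fun t ht hr => ?_⟩
  exact h.notMem_nearBdry_of_reachAvoiding hZU hr ht.1

theorem tLE_nearBdry_union (h₁ : IsCut Vs H A Y Z₁) (h₂ : IsCut Vs H A Y Z₂) :
    TLE H A Y (nearBdry H (Z₁ ∪ Z₂) Y) Z₁ ∧ TLE H A Y (nearBdry H (Z₁ ∪ Z₂) Y) Z₂ :=
  ⟨h₁.tLE_nearBdry subset_union_left (h₁.union h₂).target_notMem,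
    h₂.tLE_nearBdry subset_union_right (h₁.union h₂).target_notMem⟩

theorem nearBdry_inter_nearBdry_subset (h : IsCut Vs H A Y Z) (hZU : Z ⊆ U) :
    nearBdry H U Y ∩ nearBdry H U A ⊆ Z := by
  rintro v ⟨hvY, hvA⟩
  by_contra hvZ
  exact h.notMem_nearBdry_of_reachAvoiding hZU (reachAvoiding_of_mem_nearBdry hvA hZU hvZ) hvY

end IsCut

theorem minimalCut_iff :
    MinimalCut Vs H A Y Z ↔ IsCut Vs H A Y Z ∧ ∀ z ∈ Z, ReachAvoiding H (Z \ {z}) A Y := by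
  refine and_congr_right fun hcut => ⟨fun hmin z hz => ?_, fun hreach Z' hZ' hcut' => ?_⟩
  · by_contra hr
    exact hmin (Z \ {z}) (sdiff_singleton_ssubset.2 hz) (isCut_iff.2
      ⟨sdiff_subset.trans hcut.subset, fun h => hcut.source_notMem h.1,
        fun h => hcut.target_notMem h.1, hr⟩)
  · obtain ⟨z, hz, hzZ'⟩ := exists_of_ssubset hZ'
    exact hcut'.not_reachAvoiding ((hreach z hz).mono (subset_sdiff_singleton hZ'.subset hzZ'))

theorem MinimalCut.exists_reachAvoiding_adj (h : MinimalCut Vs H A Y Z) {z : V} (hz : z ∈ Z) :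
    ∃ x, ReachAvoiding H Z A x ∧ H.Adj x z :=
  (((minimalCut_iff.1 h).2 z hz).or_exists_adj_of_diff_singleton h.1.source_notMem).resolve_left
    h.1.not_reachAvoiding

/-- `z` keeps a neighbour on its `A` side because the part of `H` reachable from `A` off `Z`
misses the near boundary altogether, and it has a neighbour on its `Y` side by construction. -/
theorem MinimalCut.reachAvoiding_nearBdry_diff_singleton (h : MinimalCut Vs H A Y Z)
    (hZU : Z ⊆ U) {z : V} (hz : z ∈ Z) (hzU : z ∈ nearBdry H U Y) :
    ReachAvoiding H (nearBdry H U Y \ {z}) A Y := by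
  obtain ⟨x, hAx, hxz⟩ := h.exists_reachAvoiding_adj hz
  obtain ⟨-, u, hYu, hzu⟩ := mem_nearBdry_iff.1 hzU
  have hAz : ReachAvoiding H (nearBdry H U Y \ {z}) A z :=
    (hAx.of_forall_notMem fun v hv hvU =>
      h.1.notMem_nearBdry_of_reachAvoiding hZU hv hvU.1).tail hxz fun hmem => hmem.2 rfl
  have hYz : ReachAvoiding H (nearBdry H U Y \ {z}) Y z :=
    (hYu.mono (sdiff_subset.trans nearBdry_subset)).tail hzu.symm fun hmem => hmem.2 rfl
  exact hAz.trans hYz.symm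

theorem MinimalCut.nearBdry_union (h₁ : MinimalCut Vs H A Y Z₁) (h₂ : MinimalCut Vs H A Y Z₂) :
    MinimalCut Vs H A Y (nearBdry H (Z₁ ∪ Z₂) Y) :=
  minimalCut_iff.2 ⟨(h₁.1.union h₂.1).nearBdry, fun _ hz => (nearBdry_subset hz).elim
    (fun hz₁ => h₁.reachAvoiding_nearBdry_diff_singleton subset_union_left hz₁ hz)
    (fun hz₂ => h₂.reachAvoiding_nearBdry_diff_singleton subset_union_right hz₂ hz)⟩

/-- Submodularity: the near boundaries of `Z₁ ∪ Z₂` seen from `Y` and from `A` are cuts with union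
inside `Z₁ ∪ Z₂` and intersection inside `Z₁ ∩ Z₂`, so their sizes add up to at most twice the
minimum. -/
theorem MinimumCut.nearBdry_union (h₁ : MinimumCut Vs H A Y Z₁) (h₂ : MinimumCut Vs H A Y Z₂)
    (hfin₁ : Z₁.Finite) (hfin₂ : Z₂.Finite) :
    MinimumCut Vs H A Y (nearBdry H (Z₁ ∪ Z₂) Y) := by
  have hcut := h₁.1.union h₂.1
  refine ⟨hcut.nearBdry, fun Z' hZ' => ?_⟩
  have hfin := hfin₁.union hfin₂
  have hfinY := hfin.subset (nearBdry_subset (H := H) (y := Y))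
  have hfinA := hfin.subset (nearBdry_subset (H := H) (y := A))
  have hunion := ncard_le_ncard
    (union_subset (nearBdry_subset (H := H) (y := Y)) (nearBdry_subset (H := H) (y := A))) hfin
  have hinter := ncard_le_ncard
    (subset_inter (h₁.1.nearBdry_inter_nearBdry_subset (subset_union_left (t := Z₂)))
      (h₂.1.nearBdry_inter_nearBdry_subset subset_union_right)) (hfin₁.inter_of_left Z₂)
  have hsum := ncard_union_add_ncard_inter _ _ hfinY hfinA
  have hsumZ := ncard_union_add_ncard_inter Z₁ Z₂ hfin₁ hfin₂
  have hA := h₂.2 _ hcut.symm.nearBdry.symm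
  have hZ₁ := h₁.2 Z' hZ'
  omega

end NearBoundary

section LatentProjection

variable {V : Type*} {H H' : SimpleGraph V} {I W : Set V} {u v : V}

/-- The latent projection of `H` onto the complement of `I`: two distinct vertices outside `I` are
adjacent if some walk of `H` joins them through `I`. The vertices of `I` stay as isolated ones. -/
def latentProj (H : SimpleGraph V) (I : Set V) : SimpleGraph V where
  Adj u v := u ≠ v ∧ u ∉ I ∧ v ∉ I ∧ ∃ p : H.Walk u v, ∀ x ∈ p.support, x ≠ u → x ≠ v → x ∈ I
  symm := ⟨fun _ _ ⟨hne, hu, hv, p, hp⟩ => ⟨hne.symm, hv, hu, p.reverse, fun x hx hxv hxu =>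
    hp x (by simpa using hx) hxu hxv⟩⟩
  loopless := ⟨fun _ h => h.1 rfl⟩

theorem reachAvoiding_congr (hadj : ∀ a b, a ∉ W → b ∉ W → (H.Adj a b ↔ H'.Adj a b)) :
    ReachAvoiding H W u v ↔ ReachAvoiding H' W u v :=
  ⟨fun h => h.mem_of_closed (S := {x | ReachAvoiding H' W u x})
    (reachAvoiding_self_iff.2 h.start_notMem) fun a ha b haW hbW hab =>
      ha.tail ((hadj a b haW hbW).1 hab) hbW,
  fun h => h.mem_of_closed (S := {x | ReachAvoiding H W u x})
    (reachAvoiding_self_iff.2 h.start_notMem) fun a ha b haW hbW hab =>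
      ha.tail ((hadj a b haW hbW).2 hab) hbW⟩

theorem ReachAvoiding.of_latentProj (h : ReachAvoiding (latentProj H I) W u v)
    (hWI : Disjoint W I) : ReachAvoiding H W u v := by
  refine h.mem_of_closed (S := {x | ReachAvoiding H W u x})
    (reachAvoiding_self_iff.2 h.start_notMem) ?_
  rintro a ha b haW hbW ⟨-, -, -, p, hp⟩
  refine ha.trans ⟨p, fun x hx hxW => ?_⟩
  exact disjoint_left.1 hWI hxW
    (hp x hx (ne_of_mem_of_not_mem hxW haW) (ne_of_mem_of_not_mem hxW hbW))

/-- Along the walk in `H` one keeps track of the last vertex `h` outside `I`. -/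
protected theorem ReachAvoiding.latentProj (h : ReachAvoiding H W u v) (hu : u ∉ I) (hv : v ∉ I) :
    ReachAvoiding (latentProj H I) W u v := by
  have hmem : v ∈ {x | ∃ h, h ∉ I ∧ ReachAvoiding (latentProj H I) W u h ∧
      ∃ p : H.Walk h x, ∀ z ∈ p.support, z = h ∨ z ∈ I} := by
    refine h.mem_of_closed
      ⟨u, hu, reachAvoiding_self_iff.2 h.start_notMem, .nil, by simp⟩ ?_
    rintro a ⟨h, hhI, hreach, p, hp⟩ b - hbW hab
    by_cases hbI : b ∈ I
    · refine ⟨h, hhI, hreach, p.concat hab, fun z hz => ?_⟩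
      rw [SimpleGraph.Walk.support_concat] at hz
      grind
    · refine ⟨b, hbI, ?_, .nil, by simp⟩
      by_cases hhb : h = b
      · exact hhb ▸ hreach
      · refine hreach.tail ⟨hhb, hhI, hbI, p.concat hab, fun z hz hzh hzb => ?_⟩ hbW
        rw [SimpleGraph.Walk.support_concat] at hz
        grind
  obtain ⟨h, -, hreach, p, hp⟩ := hmem
  rwa [(hp v p.end_mem_support).resolve_right hv]

theorem reachAvoiding_latentProj_iff (hWI : Disjoint W I) (hu : u ∉ I) (hv : v ∉ I) :
    ReachAvoiding (latentProj H I) W u v ↔ ReachAvoiding H W u v :=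
  ⟨fun h => h.of_latentProj hWI, fun h => h.latentProj hu hv⟩

end LatentProjection

section Ancestors

variable {V : Type*} {E : V → V → Prop} {S T : Set V} {u v : V}

theorem subset_anc_s10 : S ⊆ anc E S := fun u hu => ⟨u, hu, .refl⟩

theorem mem_anc_of_reflTransGen (huv : ReflTransGen E u v) (hv : v ∈ anc E S) : u ∈ anc E S :=
  let ⟨s, hs, hvs⟩ := hv
  ⟨s, hs, huv.trans hvs⟩

theorem mem_anc_of_rel (huv : E u v) (hv : v ∈ anc E S) : u ∈ anc E S :=
  mem_anc_of_reflTransGen (.single huv) hv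

theorem anc_subset_anc (h : S ⊆ anc E T) : anc E S ⊆ anc E T :=
  fun _ ⟨_, hs, hus⟩ => mem_anc_of_reflTransGen hus (h hs)

end Ancestors

section OpenWalk

variable {V : Type*} {E : V → V → Prop} {Z Z' S : Set V} {a c d u w x y z : V}
  {p r s t : List V}

/-- The triple `x, y, z` of consecutive vertices does not block a path given `Z`: `y` is an
ancestor of `Z` if it is a collider and lies outside `Z` otherwise. -/
def ActiveAt (E : V → V → Prop) (Z : Set V) (x y z : V) : Prop :=
  (E x y → E z y → y ∈ anc E Z) ∧ (¬ (E x y ∧ E z y) → y ∉ Z)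

/-- Walks to `y`, listed from their first vertex, that are open given `Z`. Vertices may repeat, so
that walks can be extended at the head freely. -/
inductive IsOpenWalk (E : V → V → Prop) (Z : Set V) (y : V) : List V → Prop
  | single : IsOpenWalk E Z y [y]
  | cons {u w : V} {t : List V} (hadj : E u w ∨ E w u) (hactive : ∀ x ∈ t.head?, ActiveAt E Z u w x)
      (htail : IsOpenWalk E Z y (w :: t)) : IsOpenWalk E Z y (u :: w :: t)

theorem isOpenWalk_cons_cons_iff :
    IsOpenWalk E Z y (u :: w :: t) ↔
      (E u w ∨ E w u) ∧ (∀ x ∈ t.head?, ActiveAt E Z u w x) ∧ IsOpenWalk E Z y (w :: t) :=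
  ⟨fun | .cons hadj hactive htail => ⟨hadj, hactive, htail⟩,
    fun ⟨hadj, hactive, htail⟩ => .cons hadj hactive htail⟩

theorem isOpenWalk_singleton_iff : IsOpenWalk E Z y [u] ↔ u = y :=
  ⟨fun | .single => rfl, by rintro rfl; exact .single⟩

theorem not_blocked_iff :
    ¬ Blocked E Z p ↔ ∀ x y z, InteriorAt p x y z → ActiveAt E Z x y z := by
  simp only [Blocked, ActiveAt, anc, desc, mem_ofPred_eq, mem_singleton_iff, exists_eq_left]
  push Not
  grind

theorem interiorAt_cons_cons_iff :
    InteriorAt (u :: w :: t) x y z ↔ (u = x ∧ w = y ∧ z ∈ t.head?) ∨ InteriorAt (w :: t) x y z := by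
  constructor
  · rintro ⟨_ | ⟨u', s⟩, t', h⟩
    · left
      simp only [List.nil_append, List.cons.injEq] at h
      simp [h]
    · exact .inr ⟨s, t', (List.cons.inj h).2⟩
  · rintro (⟨rfl, rfl, hz⟩ | ⟨s, t', h⟩)
    · obtain ⟨t', rfl⟩ := List.head?_eq_some_iff.1 hz
      exact ⟨[], t', rfl⟩
    · exact ⟨u :: s, t', by rw [h, List.cons_append]⟩

theorem not_interiorAt_singleton : ¬ InteriorAt [u] x y z := by
  rintro ⟨s, t, h⟩
  have := congrArg List.length h
  grind

theorem isOpenWalk_iff :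
    IsOpenWalk E Z y p ↔
      p.IsChain (fun b c => E b c ∨ E c b) ∧ p.getLast? = some y ∧ ¬ Blocked E Z p := by
  rw [not_blocked_iff]
  induction p with
  | nil => simpa using (nofun : ¬ IsOpenWalk E Z y [])
  | cons u t ih =>
    cases t with
    | nil => simp [isOpenWalk_singleton_iff, not_interiorAt_singleton]
    | cons w t =>
      rw [isOpenWalk_cons_cons_iff, ih, List.isChain_cons_cons, List.getLast?_cons_cons]
      simp only [interiorAt_cons_cons_iff]
      grind

theorem IsOpenWalk.of_append (h : IsOpenWalk E Z y (s ++ c :: r)) : IsOpenWalk E Z y (c :: r) := by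
  induction s with
  | nil => exact h
  | cons u s ih =>
    cases s with
    | nil => exact (isOpenWalk_cons_cons_iff.1 h).2.2
    | cons w s => exact ih (isOpenWalk_cons_cons_iff.1 h).2.2

theorem IsOpenWalk.exists_activeAt (h : IsOpenWalk E Z y (u :: (s ++ c :: x :: r))) :
    ∃ z, ActiveAt E Z z c x := by
  induction s generalizing u with
  | nil => exact ⟨u, (isOpenWalk_cons_cons_iff.1 h).2.1 x rfl⟩
  | cons w s ih => exact ih (isOpenWalk_cons_cons_iff.1 h).2.2

theorem IsOpenWalk.mono (h : IsOpenWalk E Z y p) (hZZ' : Z ⊆ Z')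
    (hp : ∀ x ∈ p, x ∈ Z' → x ∈ Z) : IsOpenWalk E Z' y p := by
  induction h with
  | single => exact .single
  | @cons u w t hadj hactive _ ih =>
    rw [List.forall_mem_cons] at hp
    refine .cons hadj (fun x hx => ?_) (ih hp.2)
    obtain ⟨hcol, hncol⟩ := hactive x hx
    exact ⟨fun huw hxw => anc_subset_anc (hZZ'.trans subset_anc_s10) (hcol huw hxw),
      fun hn hw => hncol hn (hp.2 w List.mem_cons_self hw)⟩

/-- The walk runs forward until it meets its first collider, which is an ancestor of `Z`. -/
theorem IsOpenWalk.mem_anc_or_isChain (h : IsOpenWalk E Z y (u :: w :: t)) (huw : E u w) :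
    w ∈ anc E Z ∨ (u :: w :: t).IsChain E := by
  induction t generalizing u w with
  | nil => exact .inr (List.isChain_pair.2 huw)
  | cons x t ih =>
    obtain ⟨-, hactive, htail⟩ := isOpenWalk_cons_cons_iff.1 h
    by_cases hxw : E x w
    · exact .inl ((hactive x rfl).1 huw hxw)
    · have hwx : E w x := (isOpenWalk_cons_cons_iff.1 htail).1.resolve_right hxw
      exact (ih htail hwx).imp (mem_anc_of_rel hwx) fun hchain => hchain.cons_cons huw

theorem IsOpenWalk.mem_anc_insert_of_rel (h : IsOpenWalk E Z y (u :: w :: t)) (huw : E u w) :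
    w ∈ anc E (insert y Z) := by
  rcases h.mem_anc_or_isChain huw with hw | hchain
  · exact anc_subset_anc ((subset_insert y Z).trans subset_anc_s10) hw
  · have hlast : (w :: t).getLast (List.cons_ne_nil w t) = y := by
      simpa [List.getLast?_eq_some_getLast] using (isOpenWalk_iff.1 h).2.1
    refine mem_anc_of_reflTransGen ?_ (subset_anc_s10 (mem_insert y Z))
    simpa [hlast] using List.relationReflTransGen_of_exists_isChain_cons t hchain.tail hlast

theorem IsOpenWalk.mem_of_anc_subset (h : IsOpenWalk E Z y (u :: t))
    (hS : anc E S ⊆ S) (hZ : Z ⊆ S) (hy : y ∈ S) (hu : u ∈ S) : ∀ v ∈ u :: t, v ∈ S := by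
  induction t generalizing u with
  | nil => simpa using hu
  | cons w t ih =>
    obtain ⟨hadj, -, htail⟩ := isOpenWalk_cons_cons_iff.1 h
    have hanc : anc E (insert y Z) ⊆ S :=
      (anc_subset_anc ((insert_subset hy hZ).trans subset_anc_s10)).trans hS
    have hw : w ∈ S := hadj.elim (fun huw => hanc (h.mem_anc_insert_of_rel huw))
      fun hwu => hS ⟨u, hu, .single hwu⟩
    exact List.forall_mem_cons.2 ⟨hu, ih htail hw⟩

theorem IsOpenWalk.shortcut [Std.Asymm E] (h : IsOpenWalk E Z y (d :: c :: (s ++ c :: r))) :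
    IsOpenWalk E Z y (d :: c :: r) := by
  obtain ⟨hadj, hactive, htail⟩ := isOpenWalk_cons_cons_iff.1 h
  refine .cons hadj (fun x hx => ?_) (htail.of_append (s := c :: s))
  obtain ⟨r, rfl⟩ := List.head?_eq_some_iff.1 hx
  obtain ⟨w, t, hwt⟩ : ∃ w t, s ++ c :: x :: r = w :: t :=
    List.exists_cons_of_ne_nil (by simp)
  have hfirst : ActiveAt E Z d c w := hactive w (by rw [hwt]; rfl)
  obtain ⟨z, hlast⟩ := htail.exists_activeAt
  refine ⟨fun hdc hxc => ?_, fun hn => ?_⟩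
  · by_cases hwc : E w c
    · exact hfirst.1 hdc hwc
    rw [hwt] at htail
    have hcw : E c w := (isOpenWalk_cons_cons_iff.1 htail).1.resolve_right hwc
    refine (htail.mem_anc_or_isChain hcw).elim (mem_anc_of_rel hcw) fun hchain => ?_
    rw [← hwt] at hchain
    have hcx : E c x := (List.isChain_cons_cons.1 (hchain.tail.right_of_append)).1
    exact (asymm_of E hcx hxc).elim
  · rcases not_and_or.1 hn with hdc | hxc
    · exact hfirst.2 fun hcol => hdc hcol.1
    · exact hlast.2 fun hcol => hxc hcol.2

theorem exists_nodup_isOpenWalk [Std.Asymm E] (c : V) (t : List V) :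
    ∃ t', (c :: t').Nodup ∧ (IsOpenWalk E Z y (c :: t) → IsOpenWalk E Z y (c :: t')) ∧
      ∀ d, IsOpenWalk E Z y (d :: c :: t) → IsOpenWalk E Z y (d :: c :: t') := by
  induction t generalizing c with
  | nil => exact ⟨[], List.nodup_singleton c, id, fun _ => id⟩
  | cons w t ih =>
    obtain ⟨t', hnodup, htail, hcons⟩ := ih w
    by_cases hc : c ∈ w :: t'
    · obtain ⟨s, r, hsr⟩ := List.append_of_mem hc
      refine ⟨r, hnodup.sublist ?_, fun h => ?_, fun d h => ?_⟩
      · rw [hsr]; exact List.sublist_append_right s _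
      · have := htail (isOpenWalk_cons_cons_iff.1 h).2.2
        rw [hsr] at this
        exact this.of_append
      · obtain ⟨hadj, hactive, hcw⟩ := isOpenWalk_cons_cons_iff.1 h
        have hdc : IsOpenWalk E Z y (d :: c :: w :: t') := .cons hadj hactive (hcons c hcw)
        rw [hsr] at hdc
        exact hdc.shortcut
    · refine ⟨w :: t', List.nodup_cons.2 ⟨hc, hnodup⟩, hcons c, fun d h => ?_⟩
      obtain ⟨hadj, hactive, hcw⟩ := isOpenWalk_cons_cons_iff.1 h
      exact .cons hadj hactive (hcons c hcw)

/-- `u` is joined to `y` by an open walk given `Z`: the walk version of d-connection, which agrees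
with the path version when `E` is asymmetric. -/
def DConnected (E : V → V → Prop) (Z : Set V) (u y : V) : Prop :=
  ∃ t, IsOpenWalk E Z y (u :: t)

theorem not_dSep_singleton_iff [Std.Asymm E] : ¬ DSep E {a} {y} Z ↔ DConnected E Z a y := by
  simp only [DSep, mem_singleton_iff, forall_eq, not_forall]
  constructor
  · rintro ⟨p, ⟨hchain, hhead, hlast, -⟩, hopen⟩
    obtain ⟨t, rfl⟩ := List.head?_eq_some_iff.1 hhead
    exact ⟨t, isOpenWalk_iff.2 ⟨hchain, hlast, hopen⟩⟩
  · rintro ⟨t, h⟩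
    obtain ⟨t', hnodup, ht', -⟩ := exists_nodup_isOpenWalk (E := E) (Z := Z) (y := y) a t
    obtain ⟨hchain, hlast, hopen⟩ := isOpenWalk_iff.1 (ht' h)
    exact ⟨a :: t', ⟨hchain, rfl, hlast, hnodup⟩, hopen⟩

end OpenWalk

section Moralization

variable {V : Type*} {E : V → V → Prop} {Vs Z : Set V} {a b c d u v w y : V} {t : List V}

theorem moral_adj :
    (moral E Vs).Adj u v ↔
      u ≠ v ∧ u ∈ Vs ∧ v ∈ Vs ∧ (E u v ∨ E v u ∨ ∃ w ∈ Vs, E u w ∧ E v w) := by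
  simp only [moral, SimpleGraph.fromRel_adj]
  grind

theorem reachAvoiding_moral_of_rel (huv : E u v ∨ E v u ∨ ∃ w ∈ Vs, E u w ∧ E v w)
    (hu : u ∈ Vs) (hv : v ∈ Vs) (huZ : u ∉ Z) (hvZ : v ∉ Z) :
    ReachAvoiding (moral E Vs) Z u v := by
  by_cases heq : u = v
  · exact heq ▸ reachAvoiding_self_iff.2 huZ
  · exact .of_adj (moral_adj.2 ⟨heq, hu, hv, huv⟩) huZ hvZ

theorem IsOpenWalk.notMem_of_rel [Std.Asymm E] (h : IsOpenWalk E Z y (w :: u :: t))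
    (huw : E u w) (hy : y ∉ Z) : u ∉ Z := by
  obtain ⟨-, hactive, htail⟩ := isOpenWalk_cons_cons_iff.1 h
  cases t with
  | nil => rwa [isOpenWalk_singleton_iff.1 htail]
  | cons x t => exact (hactive x rfl).2 fun hcol => asymm_of E huw hcol.1

/-- A vertex of the walk in `Z` is a collider whose two neighbours, lying outside `Z`, are married
in the moral graph. -/
theorem IsOpenWalk.reachAvoiding_moral [Std.Asymm E] (hy : y ∉ Z) :
    ∀ {t : List V} {u : V}, IsOpenWalk E Z y (u :: t) → u ∉ Z → (∀ v ∈ u :: t, v ∈ Vs) →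
      ReachAvoiding (moral E Vs) Z u y
  | [], u, h, hu, _ => by
    rw [isOpenWalk_singleton_iff.1 h] at hu ⊢
    exact reachAvoiding_self_iff.2 hu
  | [w], u, h, hu, hVs => by
    obtain ⟨hadj, -, htail⟩ := isOpenWalk_cons_cons_iff.1 h
    rw [isOpenWalk_singleton_iff.1 htail] at hadj hVs
    exact reachAvoiding_moral_of_rel (by tauto) (hVs u (by simp)) (hVs y (by simp)) hu hy
  | w :: z :: t, u, h, hu, hVs => by
    obtain ⟨hadj, hactive, htail⟩ := isOpenWalk_cons_cons_iff.1 h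
    have htailVs := (List.forall_mem_cons.1 hVs).2
    by_cases hw : w ∈ Z
    · have hcol : E u w ∧ E z w := by_contra fun hn => (hactive z rfl).2 hn hw
      have hz : z ∉ Z := htail.notMem_of_rel hcol.2 hy
      have huz : ReachAvoiding (moral E Vs) Z u z :=
        reachAvoiding_moral_of_rel (.inr (.inr ⟨w, hVs w (by simp), hcol⟩))
          (hVs u (by simp)) (hVs z (by simp)) hu hz
      exact huz.trans (IsOpenWalk.reachAvoiding_moral hy (isOpenWalk_cons_cons_iff.1 htail).2.2 hz
        (List.forall_mem_cons.1 htailVs).2)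
    · have huw : ReachAvoiding (moral E Vs) Z u w :=
        reachAvoiding_moral_of_rel (by tauto) (hVs u (by simp)) (hVs w (by simp)) hu hw
      exact huw.trans (IsOpenWalk.reachAvoiding_moral hy htail hw htailVs)

namespace DConnected

theorem cons (h : DConnected E Z b y) (hadj : E c b ∨ E b c) (hb : b ∉ Z)
    (hcol : E c b → b ∈ anc E Z) : DConnected E Z c y := by
  obtain ⟨t, ht⟩ := h
  exact ⟨b :: t, .cons hadj (fun x _ => ⟨fun hcb _ => hcol hcb, fun _ => hb⟩) ht⟩

theorem of_rel [Std.Asymm E] (h : DConnected E Z b y) (hbc : E b c) (hb : b ∉ Z) :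
    DConnected E Z c y :=
  h.cons (.inr hbc) hb fun hcb => (asymm_of E hbc hcb).elim

theorem of_reflTransGen [Std.Asymm E] (h : DConnected E Z b y) (hbd : ReflTransGen E b d)
    (hb : b ∉ anc E Z) : DConnected E Z d y := by
  induction hbd with
  | refl => exact h
  | tail hbc hcd ih =>
    exact ih.of_rel hcd fun hc => hb (mem_anc_of_reflTransGen hbc (subset_anc_s10 hc))

theorem of_common_child [Std.Asymm E] (h : DConnected E Z b y) (hb : b ∉ Z) (hcw : E c w)
    (hbw : E b w) (hw : w ∈ anc E Z) : DConnected E Z c y := by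
  obtain ⟨t, ht⟩ := h
  refine ⟨w :: b :: t, .cons (.inl hcw) ?_ (.cons (.inr hbw) ?_ ht)⟩
  · rintro x ⟨⟩
    exact ⟨fun _ _ => hw, fun hn => (hn ⟨hcw, hbw⟩).elim⟩
  · exact fun x _ => ⟨fun hwb => (asymm_of E hbw hwb).elim, fun _ => hb⟩

end DConnected

theorem exists_isOpenWalk_of_reflTransGen [Std.Asymm E] (hcw : E c w) (hwy : ReflTransGen E w y)
    (hw : w ∉ anc E Z) : ∃ t, IsOpenWalk E Z y (c :: w :: t) := by
  induction hwy using ReflTransGen.head_induction_on generalizing c with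
  | refl => exact ⟨[], .cons (.inl hcw) (by simp) .single⟩
  | @head w x hwx _ ih =>
    obtain ⟨t, ht⟩ := ih hwx fun hx => hw (mem_anc_of_rel hwx hx)
    refine ⟨x :: t, .cons (.inl hcw) ?_ ht⟩
    rintro z ⟨⟩
    exact ⟨fun _ hxw => (asymm_of E hwx hxw).elim, fun _ hwZ => hw (subset_anc_s10 hwZ)⟩

/-- If `w` is an ancestor of `y`, the walk is restarted from `c` through `w` down to `y`; if `w` is
an ancestor of `a`, the walk from `w` is extended backwards to `a`. -/
theorem DConnected.or_of_notMem_anc [Std.Asymm E] (h : DConnected E Z w y) (hcw : E c w)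
    (hwAnc : w ∈ anc E ({a, y} ∪ Z)) (hw : w ∉ anc E Z) :
    DConnected E Z c y ∨ DConnected E Z a y := by
  obtain ⟨s, (rfl | rfl) | hs, hws⟩ := hwAnc
  · exact .inr (h.of_reflTransGen hws hw)
  · obtain ⟨t, ht⟩ := exists_isOpenWalk_of_reflTransGen hcw hws hw
    exact .inl ⟨w :: t, ht⟩
  · exact (hw ⟨s, hs, hws⟩).elim

theorem DConnected.or_of_moral_adj [Std.Asymm E] (h : DConnected E Z b y) (hb : b ∉ Z)
    (hbc : (moral E (anc E ({a, y} ∪ Z))).Adj b c) :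
    DConnected E Z c y ∨ DConnected E Z a y := by
  obtain ⟨-, hbAnc, -, hbc | hcb | ⟨w, hwAnc, hbw, hcw⟩⟩ := moral_adj.1 hbc
  · exact .inl (h.of_rel hbc hb)
  · by_cases hbZ : b ∈ anc E Z
    · exact .inl (h.cons (.inl hcb) hb fun _ => hbZ)
    · exact h.or_of_notMem_anc hcb hbAnc hbZ
  · by_cases hwZ : w ∈ anc E Z
    · exact .inl (h.of_common_child hb hcw hbw hwZ)
    · exact (h.of_rel hbw hb).or_of_notMem_anc hcw hwAnc hwZ

theorem dConnected_of_reachAvoiding_moral [Std.Asymm E]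
    (h : ReachAvoiding (moral E (anc E ({a, y} ∪ Z))) Z y a) : DConnected E Z a y := by
  have hmem : a ∈ {v | DConnected E Z v y ∨ DConnected E Z a y} := by
    refine h.mem_of_closed (.inl ⟨[], .single⟩) ?_
    rintro b (hb | ha) c hbZ - hbc
    · exact hb.or_of_moral_adj hbZ hbc
    · exact .inr ha
  exact or_self_iff.1 hmem

theorem DConnected.reachAvoiding_moral [Std.Asymm E] (h : DConnected E Z a y) (ha : a ∉ Z)
    (hy : y ∉ Z) : ReachAvoiding (moral E (anc E ({a, y} ∪ Z))) Z a y := by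
  obtain ⟨t, ht⟩ := h
  refine ht.reachAvoiding_moral hy ha (ht.mem_of_anc_subset (anc_subset_anc subset_rfl) ?_ ?_ ?_)
  · exact subset_union_right.trans subset_anc_s10
  · exact subset_anc_s10 (by simp)
  · exact subset_anc_s10 (by simp)

theorem dSep_iff_not_reachAvoiding_moral [Std.Asymm E] (ha : a ∉ Z) (hy : y ∉ Z) :
    DSep E {a} {y} Z ↔ ¬ ReachAvoiding (moral E (anc E ({a, y} ∪ Z))) Z a y := by
  rw [← not_iff_not, not_dSep_singleton_iff, not_not]
  exact ⟨fun h => h.reachAvoiding_moral ha hy, fun h => dConnected_of_reachAvoiding_moral h.symm⟩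

end Moralization

section Adjustment

variable {V : Type*} {D : V → V → Prop} {A Y : V} {L N Z : Set V} {u v : V}

theorem mem_H1verts_iff :
    v ∈ H1verts D A Y L N ↔
      v ∈ ancAYL D A Y L ∧ (v = A ∨ v = Y ∨ v ∈ N ∧ v ∉ forb D A Y) := by
  simp only [H1verts, Ignore, mem_sdiff, mem_inter_iff, mem_union, mem_univ, mem_insert_iff,
    mem_singleton_iff]
  tauto

theorem subset_H1verts_iff (hA : A ∉ Z) (hY : Y ∉ Z) :
    Z ⊆ H1verts D A Y L N ↔ Z ⊆ ancAYL D A Y L ∧ Z ⊆ N ∧ Z ∩ forb D A Y = ∅ := by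
  rw [← disjoint_iff_inter_eq_empty, disjoint_left]
  simp only [subset_def, mem_H1verts_iff]
  grind

theorem mem_ancAYL_of_H0_adj (h : (H0 D A Y L).Adj u v) : u ∈ ancAYL D A Y L :=
  (moral_adj.1 h).2.1

theorem mem_ancAYL_of_latentProj_H0_adj {I : Set V} (h : (latentProj (H0 D A Y L) I).Adj u v) :
    u ∈ ancAYL D A Y L := by
  obtain ⟨hne, -, -, p, -⟩ := h
  cases p with
  | nil => exact (hne rfl).elim
  | cons hadj _ => exact mem_ancAYL_of_H0_adj hadj

theorem H1_adj_iff_of_notMem (hL : L ⊆ Z) (hu : u ∉ Z) (hv : v ∉ Z) :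
    (H1 D A Y L N).Adj u v ↔ (latentProj (H0 D A Y L) (Ignore D A Y L N)).Adj u v := by
  have huL : u ∉ L := fun h => hu (hL h)
  have hvL : v ∉ L := fun h => hv (hL h)
  simp only [H1, SimpleGraph.fromRel_adj, exists_isPath_iff_exists_walk, huL, hvL, and_false,
    or_false]
  constructor
  · rintro ⟨hne, ⟨hu, hv, hp⟩ | ⟨hv, hu, hp⟩⟩
    · exact ⟨hne, hu.2, hv.2, hp⟩
    · exact .symm ⟨hne.symm, hv.2, hu.2, hp⟩
  · intro h
    exact ⟨h.1, .inl ⟨⟨mem_ancAYL_of_latentProj_H0_adj h, h.2.1⟩,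
      ⟨mem_ancAYL_of_latentProj_H0_adj h.symm, h.2.2.1⟩, h.2.2.2⟩⟩

theorem reachAvoiding_H1_iff (hL : L ⊆ Z) (hZ : Z ⊆ H1verts D A Y L N) :
    ReachAvoiding (H1 D A Y L N) Z A Y ↔ ReachAvoiding (H0 D A Y L) Z A Y := by
  have hA : A ∉ Ignore D A Y L N := fun h => h.1.2 (by simp)
  have hY : Y ∉ Ignore D A Y L N := fun h => h.1.2 (by simp)
  rw [reachAvoiding_congr fun _ _ => H1_adj_iff_of_notMem hL,
    reachAvoiding_latentProj_iff (disjoint_left.2 fun _ hz => (hZ hz).2) hA hY]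

theorem Acyclic.asymm (h : Acyclic D) : Std.Asymm D :=
  ⟨fun u v huv hvu => h u v huv (.single hvu)⟩

instance [Std.Asymm D] : Std.Asymm (pbd D A Y) :=
  ⟨fun _ _ huv hvu => asymm_of D huv.1 hvu.1⟩

/-- A deleted edge starts at `A`, so every deleted ancestor path is shortened to end at `A`. -/
theorem anc_pbd (hA : A ∈ Z) : anc (pbd D A Y) Z = anc D Z := by
  refine subset_antisymm
    (fun u ⟨z, hz, huz⟩ => ⟨z, hz, ReflTransGen.mono (fun _ _ h => h.1) _ _ huz⟩) ?_
  rintro u ⟨z, hz, huz⟩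
  induction huz using ReflTransGen.head_induction_on with
  | refl => exact subset_anc_s10 hz
  | @head u v huv _ ih =>
    by_cases hdel : u = A ∧ v ∈ cn D A Y
    · exact subset_anc_s10 (hdel.1 ▸ hA)
    · exact mem_anc_of_rel ⟨huv, hdel⟩ ih

theorem mem_forb_self : A ∈ forb D A Y := .inr rfl

theorem mem_forb_of_reflTransGen (hAY : A ≠ Y) (hAancY : ReflTransGen D A Y) :
    Y ∈ forb D A Y :=
  .inl ⟨Y, ⟨hAY.symm, hAancY, .refl⟩, .refl⟩

namespace GAC

theorem source_notMem (h : GAC D A Y L N Z) : A ∉ Z := fun hA =>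
  eq_empty_iff_forall_notMem.1 h.2.1 A ⟨hA, mem_forb_self⟩

theorem target_notMem (h : GAC D A Y L N Z) (hAY : A ≠ Y) (hAancY : ReflTransGen D A Y) : Y ∉ Z :=
  fun hY => eq_empty_iff_forall_notMem.1 h.2.1 Y ⟨hY, mem_forb_of_reflTransGen hAY hAancY⟩

theorem inter_ancAYL [Std.Asymm D] (h : GAC D A Y L N Z) :
    GAC D A Y L N (Z ∩ ancAYL D A Y L) := by
  obtain ⟨hsep, hforb, hLZ, hZN⟩ := h
  refine ⟨?_, ?_, subset_inter hLZ (subset_union_right.trans subset_anc_s10),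
    inter_subset_left.trans hZN⟩
  · by_contra hcon
    obtain ⟨t, ht⟩ := not_dSep_singleton_iff.1 hcon
    have hAnc : anc (pbd D A Y) ({A, Y} ∪ L) = ancAYL D A Y L := anc_pbd (by simp)
    have hmem : ∀ v ∈ A :: t, v ∈ ancAYL D A Y L :=
      ht.mem_of_anc_subset (by rw [← hAnc]; exact anc_subset_anc subset_rfl) inter_subset_right
        (subset_anc_s10 (by simp)) (subset_anc_s10 (by simp))
    exact not_dSep_singleton_iff.2
      ⟨t, ht.mono inter_subset_left fun v hv hvZ => ⟨hvZ, hmem v hv⟩⟩ hsep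
  · exact subset_empty_iff.1 (hforb ▸ inter_subset_inter_left _ inter_subset_left)

end GAC

theorem MinimalGAC.subset_ancAYL [Std.Asymm D] (h : MinimalGAC D A Y L N Z) :
    Z ⊆ ancAYL D A Y L := by
  by_contra hZ
  exact h.2 _ (inter_subset_left.ssubset_of_ne fun heq => hZ (inter_eq_left.1 heq)) h.1.inter_ancAYL

/-- Within `ancAYL`, conditioning on `Z ⊇ L` does not enlarge the ancestral set of the moral
graph. -/
theorem dSep_pbd_iff [Std.Asymm D] (hA : A ∉ Z) (hY : Y ∉ Z) (hL : L ⊆ Z)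
    (hZ : Z ⊆ ancAYL D A Y L) :
    DSep (pbd D A Y) {A} {Y} Z ↔ ¬ ReachAvoiding (H0 D A Y L) Z A Y := by
  have hanc : anc D ({A, Y} ∪ Z) = ancAYL D A Y L :=
    (anc_subset_anc (union_subset (subset_union_left.trans subset_anc_s10) hZ)).antisymm
      (anc_subset_anc ((union_subset_union_right _ hL).trans subset_anc_s10))
  rw [dSep_iff_not_reachAvoiding_moral hA hY, anc_pbd (by simp), hanc, H0]

theorem Admissible.subset_H1verts (hadm : Admissible D A Y L N) : L ⊆ H1verts D A Y L N := by
  obtain ⟨Z, -, hforb, hLZ, hZN⟩ := hadm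
  exact fun l hl => mem_H1verts_iff.2 ⟨subset_anc_s10 (.inr hl), .inr (.inr
    ⟨hZN (hLZ hl), fun h => eq_empty_iff_forall_notMem.1 hforb l ⟨hLZ hl, h⟩⟩)⟩

theorem H1_adj_source (hL : L ⊆ H1verts D A Y L N) (hu : u ∈ L) (huA : u ≠ A) :
    (H1 D A Y L N).Adj A u :=
  (SimpleGraph.fromRel_adj _ _ _).2 ⟨huA.symm, .inl
    ⟨mem_H1verts_iff.2 ⟨subset_anc_s10 (by simp), .inl rfl⟩, hL hu, .inr (.inl ⟨rfl, hu⟩)⟩⟩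

theorem H1_adj_target (hL : L ⊆ H1verts D A Y L N) (hu : u ∈ L) (huY : u ≠ Y) :
    (H1 D A Y L N).Adj Y u :=
  (SimpleGraph.fromRel_adj _ _ _).2 ⟨huY.symm, .inl
    ⟨mem_H1verts_iff.2 ⟨subset_anc_s10 (by simp), .inr (.inl rfl)⟩, hL hu, .inr (.inr ⟨rfl, hu⟩)⟩⟩

/-- Each `l ∈ L` outside `Z` would open the path `A`, `l`, `Y` of `H1`. -/
theorem IsCut.required_subset (h : IsCut (H1verts D A Y L N) (H1 D A Y L N) A Y Z)
    (hL : L ⊆ H1verts D A Y L N) (hA : A ∉ L) (hY : Y ∉ L) : L ⊆ Z := by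
  intro l hl
  by_contra hlZ
  have hAl := ReachAvoiding.of_adj (H1_adj_source hL hl (ne_of_mem_of_not_mem hl hA))
    h.source_notMem hlZ
  exact h.not_reachAvoiding
    (hAl.tail (H1_adj_target hL hl (ne_of_mem_of_not_mem hl hY)).symm h.target_notMem)

theorem gac_iff_isCut [Std.Asymm D] (hAY : A ≠ Y) (hAancY : ReflTransGen D A Y)
    (hadm : Admissible D A Y L N) (hZ : Z ⊆ ancAYL D A Y L) :
    GAC D A Y L N Z ↔ IsCut (H1verts D A Y L N) (H1 D A Y L N) A Y Z := by
  constructor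
  · intro h
    have hA := h.source_notMem
    have hY := h.target_notMem hAY hAancY
    obtain ⟨hsep, hforb, hLZ, hZN⟩ := h
    have hverts := (subset_H1verts_iff hA hY).2 ⟨hZ, hZN, hforb⟩
    exact isCut_iff.2 ⟨hverts, hA, hY, fun hr =>
      (dSep_pbd_iff hA hY hLZ hZ).1 hsep ((reachAvoiding_H1_iff hLZ hverts).1 hr)⟩
  · intro h
    have ⟨Z₀, hZ₀⟩ := hadm
    have hLZ := h.required_subset hadm.subset_H1verts (fun hA => hZ₀.source_notMem (hZ₀.2.2.1 hA))
      fun hY => hZ₀.target_notMem hAY hAancY (hZ₀.2.2.1 hY)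
    obtain ⟨-, hZN, hforb⟩ := (subset_H1verts_iff h.source_notMem h.target_notMem).1 h.subset
    exact ⟨(dSep_pbd_iff h.source_notMem h.target_notMem hLZ hZ).2 fun hr =>
      h.not_reachAvoiding ((reachAvoiding_H1_iff hLZ h.subset).2 hr), hforb, hLZ, hZN⟩

theorem gac_of_isCut [Std.Asymm D] (hAY : A ≠ Y) (hAancY : ReflTransGen D A Y)
    (hadm : Admissible D A Y L N) (h : IsCut (H1verts D A Y L N) (H1 D A Y L N) A Y Z) :
    GAC D A Y L N Z :=
  (gac_iff_isCut hAY hAancY hadm (h.subset.trans sdiff_subset)).2 h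

theorem minimalGAC_iff_minimalCut [Std.Asymm D] (hAY : A ≠ Y) (hAancY : ReflTransGen D A Y)
    (hadm : Admissible D A Y L N) :
    MinimalGAC D A Y L N Z ↔ MinimalCut (H1verts D A Y L N) (H1 D A Y L N) A Y Z := by
  constructor
  · intro h
    exact ⟨(gac_iff_isCut hAY hAancY hadm h.subset_ancAYL).1 h.1,
      fun Z' hZ' hcut => h.2 Z' hZ' (gac_of_isCut hAY hAancY hadm hcut)⟩
  · intro h
    refine ⟨gac_of_isCut hAY hAancY hadm h.1, fun Z' hZ' hgac => h.2 Z' hZ' ?_⟩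
    exact (gac_iff_isCut hAY hAancY hadm
      (hZ'.subset.trans (h.1.subset.trans sdiff_subset))).1 hgac

theorem MinimumGAC.minimalGAC (h : MinimumGAC D A Y L N Z) (hfin : Z.Finite) :
    MinimalGAC D A Y L N Z :=
  ⟨h.1, fun Z' hZ' hgac => (ncard_lt_ncard hZ' hfin).not_ge (h.2 Z' hgac)⟩

theorem MinimumGAC.minimumCut [Std.Asymm D] (h : MinimumGAC D A Y L N Z) (hfin : Z.Finite)
    (hAY : A ≠ Y) (hAancY : ReflTransGen D A Y) :
    MinimumCut (H1verts D A Y L N) (H1 D A Y L N) A Y Z :=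
  ⟨((minimalGAC_iff_minimalCut hAY hAancY ⟨Z, h.1⟩).1 (h.minimalGAC hfin)).1,
    fun Z' hcut => h.2 Z' (gac_of_isCut hAY hAancY ⟨Z, h.1⟩ hcut)⟩

end Adjustment

theorem stmt10_general {V : Type*} {D : V → V → Prop} [Std.Asymm D] {A Y : V} {L N : Set V}
    (hAY : A ≠ Y) (hAancY : ReflTransGen D A Y) :
    (∀ Z₁ Z₂, MinimalGAC D A Y L N Z₁ → MinimalGAC D A Y L N Z₂ →
      MinimalGAC D A Y L N (nearBdry (H1 D A Y L N) (Z₁ ∪ Z₂) Y) ∧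
        nearBdry (H1 D A Y L N) (Z₁ ∪ Z₂) Y ⊆ Z₁ ∪ Z₂ ∧
        TLE (H1 D A Y L N) A Y (nearBdry (H1 D A Y L N) (Z₁ ∪ Z₂) Y) Z₁ ∧
        TLE (H1 D A Y L N) A Y (nearBdry (H1 D A Y L N) (Z₁ ∪ Z₂) Y) Z₂) ∧
    (∀ Z₁ Z₂, Z₁.Finite → Z₂.Finite → MinimumGAC D A Y L N Z₁ → MinimumGAC D A Y L N Z₂ →
      MinimumGAC D A Y L N (nearBdry (H1 D A Y L N) (Z₁ ∪ Z₂) Y) ∧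
        nearBdry (H1 D A Y L N) (Z₁ ∪ Z₂) Y ⊆ Z₁ ∪ Z₂ ∧
        TLE (H1 D A Y L N) A Y (nearBdry (H1 D A Y L N) (Z₁ ∪ Z₂) Y) Z₁ ∧
        TLE (H1 D A Y L N) A Y (nearBdry (H1 D A Y L N) (Z₁ ∪ Z₂) Y) Z₂) := by
  constructor
  · intro Z₁ Z₂ h₁ h₂
    have hiff {Z} := minimalGAC_iff_minimalCut (Z := Z) hAY hAancY ⟨Z₁, h₁.1⟩
    have hcut := (hiff.1 h₁).nearBdry_union (hiff.1 h₂)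
    exact ⟨hiff.2 hcut, nearBdry_subset, (hiff.1 h₁).1.tLE_nearBdry_union (hiff.1 h₂).1⟩
  · intro Z₁ Z₂ hfin₁ hfin₂ h₁ h₂
    have hcut₁ := h₁.minimumCut hfin₁ hAY hAancY
    have hcut₂ := h₂.minimumCut hfin₂ hAY hAancY
    have hcut := hcut₁.nearBdry_union hcut₂ hfin₁ hfin₂
    exact ⟨⟨gac_of_isCut hAY hAancY ⟨Z₁, h₁.1⟩ hcut.1,
        fun Z' hgac => (hcut.2 Z₁ hcut₁.1).trans (h₁.2 Z' hgac)⟩,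
      nearBdry_subset, hcut₁.1.tLE_nearBdry_union hcut₂.1⟩

/-- Proposition 6 (statement 10): if `(L, N)` is admissible and `Z₁, Z₂` are minimal
(respectively minimum) sets satisfying the graphical adjustment criterion, then
`Z₁ ∧ Z₂ = ∂_{H¹}(cc(Z₁ ∪ Z₂, Y, H¹))` is also minimal (respectively minimum);
moreover `Z₁ ∧ Z₂ ⊆ Z₁ ∪ Z₂`, `Z₁ ∧ Z₂ ⊴_{H¹} Z₁` and `Z₁ ∧ Z₂ ⊴_{H¹} Z₂`. -/
theorem stmt10 {V : Type*} [Fintype V] [DecidableEq V]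
    (D : V → V → Prop) (hacy : Acyclic D)
    (A Y : V) (L N : Set V)
    (hAY : A ≠ Y) (hAancY : Relation.ReflTransGen D A Y)
    (hLnd : L ∩ desc D {A} = ∅) (hLY : Y ∉ L)
    (hN : {A, Y} ∪ L ⊆ N)
    (hadm : Admissible D A Y L N) :
    (∀ Z₁ Z₂, MinimalGAC D A Y L N Z₁ → MinimalGAC D A Y L N Z₂ →
      MinimalGAC D A Y L N
          (bdry (H1 D A Y L N) (cc (H1 D A Y L N) (Z₁ ∪ Z₂) Y)) ∧
        bdry (H1 D A Y L N) (cc (H1 D A Y L N) (Z₁ ∪ Z₂) Y) ⊆ Z₁ ∪ Z₂ ∧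
        TLE (H1 D A Y L N) A Y
          (bdry (H1 D A Y L N) (cc (H1 D A Y L N) (Z₁ ∪ Z₂) Y)) Z₁ ∧
        TLE (H1 D A Y L N) A Y
          (bdry (H1 D A Y L N) (cc (H1 D A Y L N) (Z₁ ∪ Z₂) Y)) Z₂) ∧
    (∀ Z₁ Z₂, MinimumGAC D A Y L N Z₁ → MinimumGAC D A Y L N Z₂ →
      MinimumGAC D A Y L N
          (bdry (H1 D A Y L N) (cc (H1 D A Y L N) (Z₁ ∪ Z₂) Y)) ∧
        bdry (H1 D A Y L N) (cc (H1 D A Y L N) (Z₁ ∪ Z₂) Y) ⊆ Z₁ ∪ Z₂ ∧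
        TLE (H1 D A Y L N) A Y
          (bdry (H1 D A Y L N) (cc (H1 D A Y L N) (Z₁ ∪ Z₂) Y)) Z₁ ∧
        TLE (H1 D A Y L N) A Y
          (bdry (H1 D A Y L N) (cc (H1 D A Y L N) (Z₁ ∪ Z₂) Y)) Z₂) := by
  have := hacy.asymm
  obtain ⟨hminimal, hminimum⟩ := stmt10_general (L := L) (N := N) hAY hAancY
  exact ⟨hminimal, fun Z₁ Z₂ => hminimum Z₁ Z₂ Z₁.toFinite Z₂.toFinite⟩

end CausalGraph
end
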